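/- Let t be a positive integer and let G be a graph that is both (P_3 + P_1)-free and K_{t,t}-free. Then tree-α(G) ≤ t. -/

import Mathlib

open SimpleGraph
/-- The independence number of the subgraph of `G` induced by `s`:
the supremum of sizes of independent sets contained in `s`. -/
noncomputable def setIndepNum {V : Type*} (G : SimpleGraph V) (s : Set V) : ℕ :=
  sSup {n | ∃ t : Finset V, ↑t ⊆ s ∧ (∀ u ∈ t, ∀ v ∈ t, u ≠ v → ¬ G.Adj u v) ∧ t.card = n}

/-- A tree decomposition of a graph `G`. -/
structure TreeDecomp {V : Type*} (G : SimpleGraph V) where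
  ι : Type
  T : SimpleGraph ι
  tree : T.IsTree
  bag : ι → Set V
  bag_vert : ∀ v : V, ∃ i, v ∈ bag i
  bag_edge : ∀ u v : V, G.Adj u v → ∃ i, u ∈ bag i ∧ v ∈ bag i
  bag_conn : ∀ v : V, (T.induce {i | v ∈ bag i}).Connected

/-- The tree-independence number of `G`: the least `n` such that `G` has a tree
decomposition all of whose bags induce subgraphs with independence number at most `n`. -/
noncomputable def treeIndepNum {V : Type*} (G : SimpleGraph V) : ℕ :=
  sInf {n | ∃ D : TreeDecomp G, ∀ i, setIndepNum G (D.bag i) ≤ n}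

/-- `G` is `H`-free: no induced subgraph of `G` is isomorphic to `H`. -/
def IndFree {W V : Type*} (H : SimpleGraph W) (G : SimpleGraph V) : Prop :=
  IsEmpty (H ↪g G)

/-- The induced biclique number of `G`: the largest `s` such that `G` contains an induced
subgraph isomorphic to `K_{s,s}`. -/
noncomputable def ibn {V : Type*} (G : SimpleGraph V) : ℕ :=
  sSup {s | Nonempty (completeBipartiteGraph (Fin s) (Fin s) ↪g G)}

/-- `P_3 + P_1`: the disjoint union of a path on three vertices and an isolated vertex. -/
def P3plusP1 : SimpleGraph (Fin 3 ⊕ Fin 1) := pathGraph 3 ⊕g (⊥ : SimpleGraph (Fin 1))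

/-!
A vertex of a `(P_3 + P_1)`-free graph with two neighbours in an independent set `S` is adjacent to
all of `S`, for otherwise the two neighbours form an induced `P_3` together with it that misses some
vertex of `S`. If `S` is moreover a maximal independent set with more than two vertices, the closed
neighbourhoods of the vertices of `S` cover every edge; since each vertex lies in exactly one or in
all of them, they are the bags of a tree decomposition over an arbitrary tree on `S`.

An independent subset of such a bag contains at most one vertex that is not complete to `S`, and,
by `K_{t,t}`-freeness, fewer than `t` vertices complete to `S` as soon as `|S| ≥ t`. So take `S`
with more than `t` vertices; if there is none, a single bag is enough.
-/

section TreeDecompositions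

variable {V : Type*} {G : SimpleGraph V} {n : ℕ}

theorem setIndepNum_le {s : Set V}
    (h : ∀ A : Finset V, (A : Set V) ⊆ s → G.IsIndepSet A → A.card ≤ n) :
    setIndepNum G s ≤ n := by
  refine csSup_le ⟨0, ∅, by simp⟩ ?_
  rintro _ ⟨A, hAs, hA, rfl⟩
  exact h A hAs fun u hu v hv => hA u hu v hv

theorem treeIndepNum_le (D : TreeDecomp G) (h : ∀ i, setIndepNum G (D.bag i) ≤ n) :
    treeIndepNum G ≤ n :=
  Nat.sInf_le ⟨D, h⟩

/-- The tree decomposition over a given tree `T` whose bags are a family of sets that covers the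
vertices and edges of `G` and in which each vertex lies in at most one bag or in all of them. The
shape of `T` is then irrelevant. -/
def TreeDecomp.ofSubsingletonOrUniv {ι : Type} {T : SimpleGraph ι} (hT : T.IsTree)
    (bag : ι → Set V) (cover_vert : ∀ v, ∃ i, v ∈ bag i)
    (cover_edge : ∀ u v, G.Adj u v → ∃ i, u ∈ bag i ∧ v ∈ bag i)
    (h : ∀ v, {i | v ∈ bag i}.Subsingleton ∨ {i | v ∈ bag i} = Set.univ) : TreeDecomp G where
  ι := ι
  T := T
  tree := hT
  bag := bag
  bag_vert := cover_vert
  bag_edge := cover_edge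
  bag_conn v := by
    have : Nonempty {i | v ∈ bag i} := nonempty_subtype.2 (cover_vert v)
    rcases h v with hv | hv
    · have := hv.coe_sort
      exact ⟨.of_subsingleton⟩
    · rw [hv]
      exact (induceUnivIso T).connected_iff.2 hT.connected

variable (G) in
/-- The tree decomposition of `G` with a single bag. -/
def TreeDecomp.single : TreeDecomp G :=
  .ofSubsingletonOrUniv (T := (⊥ : SimpleGraph Unit)) .of_subsingleton (fun _ => Set.univ)
    (fun _ => ⟨(), trivial⟩) (fun _ _ _ => ⟨(), trivial, trivial⟩)
    (fun _ => .inl Set.subsingleton_of_subsingleton)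

end TreeDecompositions

section IndependentSets

variable {V : Type*} {G : SimpleGraph V} {S : Set V}

variable (G) in
/-- The closed neighbourhood `N[v]` of a vertex `v` in `G`. -/
abbrev closedNeighborSet (v : V) : Set V := insert v (G.neighborSet v)

theorem not_adj_of_isIndepSet (hS : G.IsIndepSet S) {x y : V} (hx : x ∈ S) (hy : y ∈ S) :
    ¬ G.Adj x y :=
  fun h => hS hx hy h.ne h

theorem exists_superset_maximal_isIndepSet {A : Set V} (hA : G.IsIndepSet A) :
    ∃ S, A ⊆ S ∧ Maximal G.IsIndepSet S :=
  zorn_subset_nonempty {S | G.IsIndepSet S}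
    (fun _ hc hchain _ => ⟨_, (Set.pairwise_sUnion hchain.directedOn).2 hc,
      fun _ => Set.subset_sUnion_of_mem⟩) A hA

theorem exists_mem_closedNeighborSet_of_maximal (hS : Maximal G.IsIndepSet S) (v : V) :
    ∃ s ∈ S, v ∈ closedNeighborSet G s := by
  by_contra! hv
  have hvS : v ∉ S := fun h => hv v h (Set.mem_insert v _)
  have hinsert : G.IsIndepSet (insert v S) :=
    hS.prop.insert fun s hs _ =>
      ⟨fun h => hv s hs (.inr h.symm), fun h => hv s hs (.inr h)⟩
  exact hvS (hS.le_of_ge hinsert (Set.subset_insert v S) (Set.mem_insert v S))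

end IndependentSets

section ForbiddenSubgraphs

variable {V : Type*} {G : SimpleGraph V} {m n : ℕ} {S : Set V}

theorem IndFree.exists_eq_or_adj {W₁ W₂ : Type*} {H₁ : SimpleGraph W₁} {H₂ : SimpleGraph W₂}
    (h : IndFree (H₁ ⊕g H₂) G) (f : H₁ ↪g G) (g : H₂ ↪g G) :
    ∃ i j, f i = g j ∨ G.Adj (f i) (g j) := by
  by_contra! hno
  refine h.false ⟨⟨Sum.elim f g, f.injective.sumElim g.injective fun i j => (hno i j).1⟩, ?_⟩
  rintro (i | i) (j | j)
  · simp
  · simp [(hno i j).2]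
  · simp [G.adj_comm _ (f j), (hno j i).2]
  · simp

theorem exists_pathGraph_three_embedding {a b c : V} (hab : G.Adj a b) (hbc : G.Adj b c)
    (hne : a ≠ c) (hac : ¬ G.Adj a c) : ∃ f : pathGraph 3 ↪g G, ⇑f = ![a, b, c] := by
  refine ⟨⟨⟨![a, b, c], ?_⟩, fun {i j} => ?_⟩, rfl⟩
  · intro i j
    fin_cases i <;> fin_cases j <;>
      simp [hne, hne.symm, hab.ne, hab.ne', hbc.ne, hbc.ne']
  · change G.Adj (![a, b, c] i) (![a, b, c] j) ↔ _
    fin_cases i <;> fin_cases j <;>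
      simp [pathGraph_adj, hab, hab.symm, hbc, hbc.symm, hac, G.adj_comm c a]

theorem IndFree.adj_or_adj_or_adj_of_path (h : IndFree P3plusP1 G) {a b c : V} (hab : G.Adj a b)
    (hbc : G.Adj b c) (hne : a ≠ c) (hac : ¬ G.Adj a c) (d : V) :
    G.Adj d a ∨ G.Adj d b ∨ G.Adj d c := by
  obtain ⟨f, hf⟩ := exists_pathGraph_three_embedding hab hbc hne hac
  let g : (⊥ : SimpleGraph (Fin 1)) ↪g G :=
    ⟨⟨fun _ => d, Function.injective_of_subsingleton _⟩, by simp⟩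
  obtain ⟨i, j, hij⟩ := h.exists_eq_or_adj f g
  change f i = d ∨ G.Adj (f i) d at hij
  rw [hf] at hij
  fin_cases i
  · exact hij.elim (fun had => .inr (.inl (had ▸ hab))) fun had => .inl had.symm
  · exact hij.elim (fun hbd => .inl (hbd ▸ hab.symm)) fun hbd => .inr (.inl hbd.symm)
  · exact hij.elim (fun hcd => .inr (.inl (hcd ▸ hbc.symm))) fun hcd => .inr (.inr hcd.symm)

theorem IndFree.card_lt_or_card_lt_of_isCompleteBetween
    (h : IndFree (completeBipartiteGraph (Fin m) (Fin n)) G) {A B : Finset V}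
    (hA : G.IsIndepSet A) (hB : G.IsIndepSet B) (hAB : G.IsCompleteBetween A B) :
    A.card < m ∨ B.card < n := by
  by_contra! ⟨hm, hn⟩
  obtain ⟨f⟩ : Nonempty (Fin m ↪ A) := Function.Embedding.nonempty_of_card_le (by simpa using hm)
  obtain ⟨g⟩ : Nonempty (Fin n ↪ B) := Function.Embedding.nonempty_of_card_le (by simpa using hn)
  have adj (i j) : G.Adj (f i) (g j) := hAB (f i).2 (g j).2
  refine h.false ⟨⟨Sum.elim (fun i => (f i : V)) (fun j => (g j : V)), ?_⟩, ?_⟩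
  · exact (Subtype.val_injective.comp f.injective).sumElim
      (Subtype.val_injective.comp g.injective) fun i j => (adj i j).ne
  · rintro (i | i) (j | j)
    · simp [not_adj_of_isIndepSet hA (f i).2 (f j).2]
    · simp [adj]
    · simp [(adj _ _).symm]
    · simp [not_adj_of_isIndepSet hB (g i).2 (g j).2]

theorem IndFree.pos_or_pos (h : IndFree (completeBipartiteGraph (Fin m) (Fin n)) G) :
    0 < m ∨ 0 < n := by
  simpa using h.card_lt_or_card_lt_of_isCompleteBetween (A := ∅) (B := ∅) (by simp) (by simp)
    (by simp [IsCompleteBetween])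

theorem IndFree.one_lt_or_one_lt_of_adj
    (h : IndFree (completeBipartiteGraph (Fin m) (Fin n)) G) {u v : V} (huv : G.Adj u v) :
    1 < m ∨ 1 < n := by
  simpa using h.card_lt_or_card_lt_of_isCompleteBetween (A := {u}) (B := {v}) (by simp) (by simp)
    (by simpa [IsCompleteBetween] using huv)

theorem IndFree.adj_of_adj_of_adj (h : IndFree P3plusP1 G) (hS : G.IsIndepSet S) {v x y z : V}
    (hx : x ∈ S) (hy : y ∈ S) (hxy : x ≠ y) (hxv : G.Adj x v) (hyv : G.Adj y v) (hz : z ∈ S) :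
    G.Adj z v := by
  have hnot {w : V} (hw : w ∈ S) : ¬ G.Adj z w := not_adj_of_isIndepSet hS hz hw
  simpa [hnot hx, hnot hy] using
    h.adj_or_adj_or_adj_of_path hxv hyv.symm hxy (not_adj_of_isIndepSet hS hx hy) z

theorem IndFree.subsingleton_or_eq_univ_of_closedNeighborSet (h : IndFree P3plusP1 G)
    (hS : G.IsIndepSet S) (v : V) :
    {s : S | v ∈ closedNeighborSet G s}.Subsingleton ∨
      {s : S | v ∈ closedNeighborSet G s} = Set.univ := by
  refine or_iff_not_imp_left.2 fun hv => Set.eq_univ_of_forall fun z => ?_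
  obtain ⟨x, hvx, y, hvy, hxy⟩ := Set.not_subsingleton_iff.1 hv
  have hne : (x : V) ≠ y := Subtype.coe_ne_coe.2 hxy
  rcases hvx with rfl | hxv
  · exact (hvy.elim hne (not_adj_of_isIndepSet hS y.2 x.2)).elim
  rcases hvy with rfl | hyv
  · exact (not_adj_of_isIndepSet hS x.2 y.2 hxv).elim
  exact .inr (h.adj_of_adj_of_adj hS x.2 y.2 hne hxv hyv z.2)

theorem IndFree.exists_mem_closedNeighborSet_of_adj (h : IndFree P3plusP1 G)
    (hS : Maximal G.IsIndepSet S) (hcard : 2 < S.encard) {u v : V} (huv : G.Adj u v) :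
    ∃ s ∈ S, u ∈ closedNeighborSet G s ∧ v ∈ closedNeighborSet G s := by
  obtain ⟨x, hx, hux⟩ := exists_mem_closedNeighborSet_of_maximal hS u
  obtain ⟨y, hy, hvy⟩ := exists_mem_closedNeighborSet_of_maximal hS v
  by_contra! hno
  have hvx : v ∉ closedNeighborSet G x := hno x hx hux
  have huy : u ∉ closedNeighborSet G y := fun hu => hno y hy hu hvy
  have hxu : G.Adj x u := hux.resolve_left (by rintro rfl; exact hvx (.inr huv))
  have hyv : G.Adj y v := hvy.resolve_left (by rintro rfl; exact huy (.inr huv.symm))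
  have hpair : ({x, y} : Set V).encard ≤ 2 := by
    simpa [one_add_one_eq_two] using Set.encard_insert_le {y} x
  obtain ⟨z, hz, hzxy⟩ : ∃ z ∈ S, z ∉ ({x, y} : Set V) :=
    Set.not_subset.1 fun hsub => hcard.not_ge ((Set.encard_le_encard hsub).trans hpair)
  simp only [Set.mem_insert_iff, Set.mem_singleton_iff, not_or] at hzxy
  rcases h.adj_or_adj_or_adj_of_path hxu huv (fun hxv => hvx (.inl hxv.symm))
    (fun hxv => hvx (.inr hxv)) z with hzx | hzu | hzv
  · exact not_adj_of_isIndepSet hS.prop hz hx hzx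
  · exact huy (.inr (h.adj_of_adj_of_adj hS.prop hz hx hzxy.1 hzu hxu hy))
  · exact hvx (.inr (h.adj_of_adj_of_adj hS.prop hz hy hzxy.2 hzv hyv hx))

theorem IndFree.exists_treeDecomp_closedNeighborSet {V : Type} {G : SimpleGraph V} {S : Set V}
    (h : IndFree P3plusP1 G) (hS : Maximal G.IsIndepSet S) (hne : S.Nonempty)
    (hedge : ∀ u v, G.Adj u v →
      ∃ s ∈ S, u ∈ closedNeighborSet G s ∧ v ∈ closedNeighborSet G s) :
    ∃ D : TreeDecomp G, ∀ i, ∃ s ∈ S, D.bag i = closedNeighborSet G s := by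
  have := hne.to_subtype
  obtain ⟨T, -, hT⟩ := (connected_top (V := S)).exists_isTree_le
  let D : TreeDecomp G := .ofSubsingletonOrUniv hT (fun s : S => closedNeighborSet G s)
    (fun v => by
      simpa only [Subtype.exists, exists_prop] using exists_mem_closedNeighborSet_of_maximal hS v)
    (fun u v huv => by simpa only [Subtype.exists, exists_prop] using hedge u v huv)
    (h.subsingleton_or_eq_univ_of_closedNeighborSet hS.prop)
  exact ⟨D, fun s : S => ⟨s, s.2, rfl⟩⟩

theorem IndFree.subsingleton_not_complete (h : IndFree P3plusP1 G) (hS : G.IsIndepSet S)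
    (hSnt : S.Nontrivial) {s : V} (hs : s ∈ S) {B : Set V} (hB : G.IsIndepSet B)
    (hBs : B ⊆ closedNeighborSet G s) : {v ∈ B | ¬ ∀ x ∈ S, G.Adj v x}.Subsingleton := by
  rintro u ⟨hu, huS⟩ v ⟨hv, hvS⟩
  by_contra huv
  have hnot : ¬ G.Adj u v := not_adj_of_isIndepSet hB hu hv
  have hsu : G.Adj s u := (hBs hu).resolve_left <| by
    rintro rfl
    exact (hBs hv).elim (Ne.symm huv) hnot
  have hsv : G.Adj s v := (hBs hv).resolve_left <| by
    rintro rfl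
    exact hnot hsu.symm
  obtain ⟨r, hr, hrs⟩ := hSnt.exists_ne s
  have complete_of_adj {w : V} (hsw : G.Adj s w) (hrw : G.Adj r w) : ∀ x ∈ S, G.Adj w x :=
    fun x hx => (h.adj_of_adj_of_adj hS hr hs hrs hrw hsw hx).symm
  rcases h.adj_or_adj_or_adj_of_path hsu.symm hsv huv hnot r with hru | hrs' | hrv
  · exact huS (complete_of_adj hsu hru)
  · exact not_adj_of_isIndepSet hS hr hs hrs'
  · exact hvS (complete_of_adj hsv hrv)

theorem IndFree.card_le_of_subset_closedNeighborSet (h : IndFree P3plusP1 G)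
    (h' : IndFree (completeBipartiteGraph (Fin m) (Fin n)) G) (hS : G.IsIndepSet S)
    (hSnt : S.Nontrivial) {A : Finset V} (hAS : (A : Set V) ⊆ S) (hA : n ≤ A.card) {s : V}
    (hs : s ∈ S) {B : Finset V} (hB : G.IsIndepSet B)
    (hBs : (B : Set V) ⊆ closedNeighborSet G s) : B.card ≤ m := by
  classical
  have hcomplete : (B.filter fun v => ∀ x ∈ S, G.Adj v x).card < m := by
    have hindep := hB.mono (Finset.filter_subset (fun v => ∀ x ∈ S, G.Adj v x) B)
    exact (h'.card_lt_or_card_lt_of_isCompleteBetween hindep (hS.mono hAS) fun v hv x hx =>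
      (Finset.mem_filter.1 hv).2 x (hAS hx)).resolve_right hA.not_gt
  have hrest : (B.filter fun v => ¬ ∀ x ∈ S, G.Adj v x).card ≤ 1 :=
    Finset.card_le_one_iff_subsingleton.2
      (by simpa using h.subsingleton_not_complete hS hSnt hs hB hBs)
  have := B.card_filter_add_card_filter_not fun v => ∀ x ∈ S, G.Adj v x
  omega

end ForbiddenSubgraphs

theorem stmt_15_general (t : ℕ) {V : Type} (G : SimpleGraph V) (h1 : IndFree P3plusP1 G)
    (h2 : IndFree (completeBipartiteGraph (Fin t) (Fin t)) G) : treeIndepNum G ≤ t := by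
  by_cases hsmall : ∀ A : Finset V, G.IsIndepSet A → A.card ≤ t
  · exact treeIndepNum_le (.single G) fun _ => setIndepNum_le fun A _ => hsmall A
  push Not at hsmall
  obtain ⟨A, hA, htA⟩ := hsmall
  obtain ⟨S, hAS, hS⟩ := exists_superset_maximal_isIndepSet hA
  have ht : 0 < t := or_self_iff.1 h2.pos_or_pos
  have htS : t < S.encard :=
    (by simpa using htA : (t : ℕ∞) < (A : Set V).encard).trans_le (Set.encard_le_encard hAS)
  have hSnt : S.Nontrivial :=
    Set.one_lt_encard_iff_nontrivial.1 ((by exact_mod_cast ht : (1 : ℕ∞) ≤ t).trans_lt htS)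
  have hedge (u v : V) (huv : G.Adj u v) :
      ∃ s ∈ S, u ∈ closedNeighborSet G s ∧ v ∈ closedNeighborSet G s := by
    have ht' : 1 < t := or_self_iff.1 (h2.one_lt_or_one_lt_of_adj huv)
    exact h1.exists_mem_closedNeighborSet_of_adj hS
      ((by exact_mod_cast ht' : (2 : ℕ∞) ≤ t).trans_lt htS) huv
  obtain ⟨D, hD⟩ := h1.exists_treeDecomp_closedNeighborSet hS hSnt.nonempty hedge
  refine treeIndepNum_le D fun i => setIndepNum_le fun B hBD hB => ?_
  obtain ⟨s, hs, hi⟩ := hD i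
  exact h1.card_le_of_subset_closedNeighborSet h2 hS.prop hSnt hAS htA.le hs hB (hi ▸ hBD)

/-- Let `t` be a positive integer and let `G` be a graph that is both
`(P_3 + P_1)`-free and `K_{t,t}`-free. Then `tree-α(G) ≤ t`. -/
theorem stmt_15 (t : ℕ) (ht : 0 < t) {V : Type} [Finite V] (G : SimpleGraph V)
    (h1 : IndFree P3plusP1 G)
    (h2 : IndFree (completeBipartiteGraph (Fin t) (Fin t)) G) :
    treeIndepNum G ≤ t :=
  stmt_15_general t G h1 h2
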